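/- Let ν > 0 and ε > 0. Define f(x) = (2π)^{−1} ∫_ℝ e^{−ξ⁴} e^{i ξ x} dξ and C₁ = ∫_ℝ |f(x)| dx. Then there exist t > 0 and a C^∞ function h₀ : ℝ → ℝ, 2π-periodic, with ∫_{−π}^{π} h₀(x) dx = 0 and sup_{x ∈ ℝ} |h₀'(x)| < 1, such that sup_{x ∈ ℝ} | ∫_ℝ (νt)^{−1/4} f( (x−y)(νt)^{−1/4} ) h₀'(y) dy | > C₁ − ε. -/

import Mathlib

open Real MeasureTheory Set

noncomputable section

/-- The 1D biharmonic heat kernel profile `f = F⁻¹(e^{−ξ⁴})`, i.e.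
`f(x) = (2π)^{−1} ∫_ℝ e^{−ξ⁴} e^{iξx} dξ` (a real-valued function, taken here as the
real part of the complex integral). -/
noncomputable def fker (x : ℝ) : ℝ :=
  ((2 * Real.pi)⁻¹ •
    ∫ ξ : ℝ, Complex.exp (Complex.I * (ξ : ℂ) * (x : ℂ) - ((ξ ^ 4 : ℝ) : ℂ))).re

/-- `C₁ = ‖f‖_{L¹(ℝ)}` where `f = F⁻¹(e^{−ξ⁴})`. -/
noncomputable def Cone : ℝ := ∫ x : ℝ, |fker x|

open Filter Topology in
lemma key_antiper (F : ℝ → ℝ) (hF : Integrable F) (hm : Measurable F) (ε : ℝ) (hε : 0 < ε) :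
    ∃ (T : ℝ) (u : ℝ → ℝ), 0 < T ∧ Measurable u ∧ Function.Antiperiodic u T ∧
      (∀ y, |u y| ≤ 1) ∧ (∫ y, |F y|) - ε < ∫ y, F y * u y := by
  let w : ℝ → ℝ → ℝ := fun T y => T * (Int.fract (y / T + 1 / 2) - 1 / 2)
  let u : ℝ → ℝ → ℝ := fun T y => SignType.sign (F (w T y)) * SignType.sign (cos (y * (π / T)))
  have hsgn : Measurable (fun x : ℝ => ((SignType.sign x : SignType) : ℝ)) := by
    have : (fun x : ℝ => ((SignType.sign x : SignType) : ℝ)) =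
        fun x => if 0 < x then 1 else if x < 0 then -1 else 0 := by
      funext x
      rw [sign_apply]
      split_ifs <;> simp
    rw [this]
    exact Measurable.ite measurableSet_Ioi measurable_const
      (Measurable.ite measurableSet_Iio measurable_const measurable_const)
  have hsb : ∀ x : ℝ, |((SignType.sign x : SignType) : ℝ)| ≤ 1 := by
    intro x
    rcases lt_trichotomy x 0 with h | h | h
    · simp [sign_neg h]
    · simp [h]
    · simp [sign_pos h]
  have hu_meas : ∀ T, Measurable (u T) := by
    intro T
    have h1 : Measurable (w T) := by
      have : Measurable (fun y : ℝ => Int.fract (y / T + 1 / 2)) :=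
        measurable_fract.comp (by fun_prop)
      exact (this.sub_const _).const_mul T
    exact (hsgn.comp (hm.comp h1)).mul
      (hsgn.comp (by fun_prop : Measurable fun y : ℝ => cos (y * (π / T))))
  have hu_b : ∀ T y, |u T y| ≤ 1 := by
    intro T y
    show |_ * _| ≤ 1
    rw [abs_mul]
    exact mul_le_one₀ (hsb _) (abs_nonneg _) (hsb _)
  have hu_anti : ∀ T, 0 < T → Function.Antiperiodic (u T) T := by
    intro T hT y
    have e1 : w T (y + T) = w T y := by
      simp only [w]
      have : (y + T) / T + 1 / 2 = (y / T + 1 / 2) + 1 := by field_simp; ring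
      rw [this, Int.fract_add_one]
    have e2 : (y + T) * (π / T) = y * (π / T) + π := by field_simp
    simp only [u, e1, e2, cos_add_pi, Left.sign_neg]
    simp
  have hlim : Tendsto (fun T => ∫ y, F y * u T y) atTop (𝓝 (∫ y, |F y|)) := by
    refine tendsto_integral_filter_of_dominated_convergence (fun y => |F y|) ?_ ?_ hF.abs ?_
    · exact Eventually.of_forall fun T => (hm.mul (hu_meas T)).aestronglyMeasurable
    · refine Eventually.of_forall fun T => Eventually.of_forall fun y => ?_
      rw [Real.norm_eq_abs, abs_mul]
      exact mul_le_of_le_one_right (abs_nonneg _) (hu_b T y)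
    · refine Eventually.of_forall fun y => ?_
      refine tendsto_const_nhds.congr' ?_
      filter_upwards [eventually_gt_atTop (2 * |y|)] with T hT
      have hT0 : 0 < T := lt_of_le_of_lt (by positivity) hT
      have hy := abs_lt.1 (show |y| < T / 2 by linarith)
      have a1 : -(1 / 2) < y / T := by rw [lt_div_iff₀ hT0]; linarith [hy.1]
      have a2 : y / T < 1 / 2 := by rw [div_lt_iff₀ hT0]; linarith [hy.2]
      have e1 : w T y = y := by
        simp only [w]
        rw [Int.fract_eq_self.2 ⟨by linarith, by linarith⟩]
        field_simp
        ring
      have e2 : 0 < cos (y * (π / T)) := by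
        have : y * (π / T) = (y / T) * π := by ring
        rw [this]
        apply cos_pos_of_mem_Ioo
        constructor <;> nlinarith [pi_pos]
      simp only [u, e1, sign_pos e2]
      simp [mul_comm (F y)]
  obtain ⟨T, h1, h2⟩ := ((hlim.eventually (lt_mem_nhds (sub_lt_self _ hε))).and
    (eventually_gt_atTop 0)).exists
  exact ⟨T, u T, h2, hu_meas T, hu_anti T h2, hu_b T, h1⟩

open Filter Topology Convolution in
lemma key_smooth (F : ℝ → ℝ) (hF : Integrable F) (hm : Measurable F) (ε : ℝ) (hε : 0 < ε) :
    ∃ (T : ℝ) (G : ℝ → ℝ), 0 < T ∧ ContDiff ℝ (⊤ : ℕ∞) G ∧ Function.Antiperiodic G T ∧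
      (∀ y, |G y| ≤ 1) ∧ (∫ y, |F y|) - ε < ∫ y, F y * G y := by
  obtain ⟨T, u, hT, hum, hua, hub, hu⟩ := key_antiper F hF hm ε hε
  have hloc : LocallyIntegrable u volume := by
    refine (locallyIntegrable_const (1 : ℝ)).mono hum.aestronglyMeasurable ?_
    exact Eventually.of_forall fun y => by simpa using hub y
  let φ : ℕ → ContDiffBump (0 : ℝ) := fun n =>
    ⟨1 / (n + 1 : ℝ), 2 * (1 / (n + 1 : ℝ)), by positivity, by
      have : 0 < 1 / (n + 1 : ℝ) := by positivity
      linarith⟩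
  let G : ℕ → ℝ → ℝ := fun n =>
    ((φ n).normed volume ⋆[ContinuousLinearMap.lsmul ℝ ℝ, volume] u)
  have hGs : ∀ n, ContDiff ℝ (⊤ : ℕ∞) (G n) := fun n =>
    (φ n).hasCompactSupport_normed.contDiff_convolution_left _ (φ n).contDiff_normed hloc
  have hGa : ∀ n, Function.Antiperiodic (G n) T := by
    intro n y
    simp only [G, convolution_def, ContinuousLinearMap.lsmul_apply, smul_eq_mul]
    rw [← integral_neg]
    congr 1
    funext t
    have : y + T - t = (y - t) + T := by ring
    rw [this, hua]
    ring
  have hGb : ∀ n y, |G n y| ≤ 1 := by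
    intro n y
    have hint : Integrable ((φ n).normed volume) volume := (φ n).integrable_normed
    calc |G n y| ≤ ∫ t, (φ n).normed volume t := by
          rw [← Real.norm_eq_abs]
          simp only [G, convolution_def, ContinuousLinearMap.lsmul_apply, smul_eq_mul]
          refine norm_integral_le_of_norm_le hint (Eventually.of_forall fun t => ?_)
          rw [norm_mul, Real.norm_of_nonneg ((φ n).nonneg_normed t)]
          exact mul_le_of_le_one_right ((φ n).nonneg_normed t) (hub _)
      _ = 1 := (φ n).integral_normed
  have hae : ∀ᵐ y, Tendsto (fun n => G n y) atTop (𝓝 (u y)) := by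
    refine ContDiffBump.ae_convolution_tendsto_right_of_locallyIntegrable (K := 2) ?_ ?_ hloc
    · have := (tendsto_one_div_add_atTop_nhds_zero_nat (𝕜 := ℝ)).const_mul 2
      simpa [φ] using this
    · exact Eventually.of_forall fun n => le_refl _
  have hlim : Tendsto (fun n => ∫ y, F y * G n y) atTop (𝓝 (∫ y, F y * u y)) := by
    refine tendsto_integral_of_dominated_convergence (fun y => |F y|) ?_ hF.abs ?_ ?_
    · exact fun n => (hm.mul (hGs n).continuous.measurable).aestronglyMeasurable
    · refine fun n => Eventually.of_forall fun y => ?_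
      rw [Real.norm_eq_abs, abs_mul]
      exact mul_le_of_le_one_right (abs_nonneg _) (hGb n y)
    · filter_upwards [hae] with y hy
      exact hy.const_mul _
  obtain ⟨n, hn⟩ := (hlim.eventually (lt_mem_nhds hu)).exists
  exact ⟨T, G n, hT, hGs n, hGa n, hGb n, hn⟩

lemma antideriv_antiper (G : ℝ → ℝ) (T : ℝ) (hG : ContDiff ℝ (⊤ : ℕ∞) G)
    (ha : Function.Antiperiodic G T) :
    ∃ h : ℝ → ℝ, ContDiff ℝ (⊤ : ℕ∞) h ∧ Function.Antiperiodic h T ∧ deriv h = G := by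
  let H : ℝ → ℝ := fun y => ∫ z in (0 : ℝ)..y, G z
  have hH : ∀ y, HasDerivAt H (G y) y := fun y =>
    hG.continuous.integral_hasStrictDerivAt 0 y |>.hasDerivAt
  have hh : ∀ y, HasDerivAt (fun y => H y - H T / 2) (G y) y := fun y => (hH y).sub_const _
  have hd : deriv (fun y => H y - H T / 2) = G := funext fun y => (hh y).deriv
  refine ⟨fun y => H y - H T / 2, ?_, ?_, hd⟩
  · exact contDiff_infty_iff_deriv.2 ⟨fun y => (hh y).differentiableAt, by rw [hd]; exact hG⟩
  · intro y
    have hK : ∀ y, HasDerivAt (fun y => H (y + T) + H y) 0 y := by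
      intro y
      have := ((hH (y + T)).comp_add_const y T).add (hH y)
      rw [ha y, neg_add_cancel] at this
      exact this
    have := is_const_of_deriv_eq_zero (fun y => (hK y).differentiableAt)
      (fun y => (hK y).deriv) y 0
    have h0 : H 0 = 0 := by simp [H]
    simp only [zero_add, h0] at this
    linarith

lemma integral_antiper (h : ℝ → ℝ) (T : ℝ) (hT : 0 < T) (hc : Continuous h)
    (ha : Function.Antiperiodic h T) : (∫ x in Icc (-T) T, h x) = 0 := by
  rw [integral_Icc_eq_integral_Ioc, ← intervalIntegral.integral_of_le (by linarith),
    ← intervalIntegral.integral_add_adjacent_intervals (b := 0)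
      (hc.intervalIntegrable _ _) (hc.intervalIntegrable _ _)]
  have := intervalIntegral.integral_comp_add_right (a := -T) (b := 0) h T
  simp only [ha _, intervalIntegral.integral_neg, neg_add_cancel, zero_add] at this
  linarith

lemma fker_measurable : Measurable fker := by
  have h : Continuous (Function.uncurry fun (x ξ : ℝ) =>
      Complex.exp (Complex.I * (ξ : ℂ) * (x : ℂ) - ((ξ ^ 4 : ℝ) : ℂ))) := by
    unfold Function.uncurry
    fun_prop
  have := (h.stronglyMeasurable.integral_prod_right (ν := volume)).measurable
  exact Complex.measurable_re.comp (this.const_smul ((2 * Real.pi)⁻¹ : ℝ))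

/-- Step 1 in the proof of Theorem 1.7, `d = 1`: for every `ν > 0`
and `ε > 0` there exist `t > 0` and a smooth `2π`-periodic mean-zero `h₀` with
`‖h₀'‖_∞ < 1` such that `‖e^{−νt∂_x⁴}∂_x h₀‖_∞ > C₁ − ε`, where the semigroup acts by
convolution with the rescaled kernel `(νt)^{−1/4} f(·(νt)^{−1/4})`. -/
theorem stmt19 (ν ε : ℝ) (hν : 0 < ν) (hε : 0 < ε) :
    ∃ (t : ℝ) (h₀ : ℝ → ℝ), 0 < t ∧
      ContDiff ℝ (⊤ : ℕ∞) h₀ ∧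
      Function.Periodic h₀ (2 * Real.pi) ∧
      (∫ x in Icc (-Real.pi) Real.pi, h₀ x) = 0 ∧
      (⨆ x : ℝ, |deriv h₀ x|) < 1 ∧
      ∃ x : ℝ, Cone - ε <
        |∫ y : ℝ, (ν * t) ^ (-(1 : ℝ) / 4) *
          fker ((x - y) * (ν * t) ^ (-(1 : ℝ) / 4)) * deriv h₀ y| := by
  by_cases hint : Integrable fker
  swap
  · have hC : Cone = 0 := by
      refine integral_undef fun h => hint ?_
      exact (integrable_norm_iff fker_measurable.aestronglyMeasurable).1 h
    refine ⟨1, fun _ => 0, one_pos, contDiff_const, fun _ => rfl, by simp, by simp, 0, ?_⟩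
    simp [hC, hε]
  obtain ⟨T, G, hT, hGs, hGa, hGb, hG⟩ := key_smooth (fun y => fker (-y)) hint.comp_neg
    (fker_measurable.comp measurable_neg) ε hε
  have hC : (∫ y, |fker (-y)|) = Cone := integral_neg_eq_self (fun y => |fker y|) volume
  rw [hC] at hG
  set J := ∫ y, fker (-y) * G y with hJ
  obtain ⟨a, ha, ha0, ha1⟩ : ∃ a : ℝ, Cone - ε < a * J ∧ 0 < a ∧ a < 1 := by
    have h1 : Filter.Tendsto (fun a : ℝ => a * J) (nhdsWithin 1 (Iio 1)) (nhds J) := by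
      have : Filter.Tendsto (fun a : ℝ => a * J) (nhds 1) (nhds (1 * J)) :=
        (continuous_id.mul continuous_const).tendsto 1
      rw [one_mul] at this
      exact this.mono_left nhdsWithin_le_nhds
    have h2 : ∀ᶠ a : ℝ in nhdsWithin 1 (Iio 1), 0 < a :=
      nhdsWithin_le_nhds (lt_mem_nhds one_pos)
    have h3 : ∀ᶠ a : ℝ in nhdsWithin 1 (Iio 1), a < 1 := self_mem_nhdsWithin
    exact ((h1.eventually (lt_mem_nhds hG)).and (h2.and h3)).exists
  let r : ℝ := T / π
  have hr : 0 < r := div_pos hT pi_pos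
  obtain ⟨h, hs, hanti, hd⟩ := antideriv_antiper (fun y => a * G (y * r)) π
    (contDiff_const.mul (hGs.comp (contDiff_id.mul contDiff_const))) (by
      intro y
      have : (y + π) * r = y * r + T := by
        simp only [r]
        field_simp
      simp only [this, hGa _]
      ring)
  have ht : (ν * ((r⁻¹) ^ 4 / ν)) ^ (-(1 : ℝ) / 4) = r := by
    have : ν * ((r⁻¹) ^ 4 / ν) = r ^ (-4 : ℝ) := by
      rw [mul_div_cancel₀ _ hν.ne', rpow_neg hr.le, inv_pow]
      norm_cast
    rw [this, ← rpow_mul hr.le]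
    norm_num
  refine ⟨(r⁻¹) ^ 4 / ν, h, by positivity, hs, ?_, integral_antiper h π pi_pos hs.continuous hanti,
    ?_, 0, ?_⟩
  · simpa using hanti.periodic_two_mul
  · refine lt_of_le_of_lt (ciSup_le fun x => ?_) ha1
    rw [hd, abs_mul, abs_of_pos ha0]
    exact mul_le_of_le_one_right ha0.le (hGb _)
  · rw [ht, hd]
    have e : (∫ y : ℝ, r * fker ((0 - y) * r) * (a * G (y * r))) = a * J := by
      have h1 := Measure.integral_comp_mul_right (fun y => fker (-y) * G y) r
      rw [abs_of_pos (inv_pos.2 hr), smul_eq_mul, ← hJ] at h1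
      have h2 : (fun y : ℝ => r * fker ((0 - y) * r) * (a * G (y * r))) =
          fun y => (r * a) * (fker (-(y * r)) * G (y * r)) := by
        funext y
        rw [zero_sub, neg_mul]
        ring
      rw [h2, integral_const_mul, h1]
      field_simp
    rw [e]
    exact lt_of_lt_of_le ha (le_abs_self _)
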